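/- Let B be a quaternion algebra over ℚ, let (D1, D2, x) be a nice admissible triple, and let w1, w2 ∈ B with w_i ∉ ℚ·1, w_i² = D_i·1 and ½·trd(w1·w2) = x. Let ℓ be a positive integer such that D3 := (x² − D1·D2)/ℓ² is an integer ≡ 0 or 1 (mod 4). Set v_i = (p_{D_i}·1 + w_i)/2 for i = 1, 2, w3 := (w1·w2 − x·1)/ℓ, and v3 := (p_{D3}·1 + w3)/2. Then there exists an order of B containing v1, v2 and v3 if and only if ℓ² divides (D1·D2 − x²)/4; and in that case the ℤ-submodule of B spanned by {1, v1, v2, v3, v1·v2, v1·v3, v2·v3, v1·v2·v3} is the smallest such order and its reduced discriminant equals |D1·D2 − x²|/(4ℓ²). -/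

import Mathlib

/-!
Throughout, `w3` anticommutes with `w1` and `w2`, and `w3 ^ 2 = D3`, so `1, w1, w2, w3` is a
`ℚ`-basis of `B` with an explicit multiplication table (`Frame`) whose Gram determinant for the
reduced trace is `-(4 ℓ D3) ^ 2`. Since `D1 * D2 - x ^ 2 = -ℓ ^ 2 * D3` is always divisible by `4`,
the divisibility condition says exactly that `4 ∣ D3`.

*Necessity.* If `D3` is odd, niceness forces one of `D1`, `D2` to be odd, say `D1`. Then
`v1 * v3` has reduced trace `1 / 2`, and an order containing `v1`, `v3` also contains the conjugate
of `v1 * v3`, hence `1 / 2`, which is not integral (`odd_contra`).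

*Sufficiency.* If `D3 = 4 * q`, then `v3 = w3 / 2` and `v1, v2, v3` satisfy quadratic and
commutation relations with integer coefficients. These rewrite every word in the `vᵢ` as a
`ℤ`-combination of the eight ordered monomials, so their span `O` is a ring (`mem_span_mul`). It is
clearly contained in every order containing the `vᵢ`.

*Discriminant.* Let `d` be the reduced discriminant of `O`.
* The quadruples `(1, v1, v2, v1 v2)`, `(1, v1, v3, v1 v3)`, `(1, v2, v3, v2 v3)` lie in `O` and
  have Gram determinants `-(ℓ² q)²`, `-(D1 q)²`, `-(D2 q)²`, so `d` divides `ℓ² q`, `D1 q`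
  and `D2 q`. Niceness gives `gcd(D1, D2, ℓ²) = 1`, hence `d ∣ q`.
* For `y ∈ O` the trace of `y * v3` lies in `q ℤ`. Thus, for a `ℤ`-basis `β` of `O`, the matrix
  `trd(βᵢ βⱼ v3)` has determinant divisible by `q ^ 4`; that determinant is `-d² q²`,
  because right multiplication by `v3` has determinant `nrd(v3)² = q²`. Hence `q ∣ d`
  (conceptually: `O v3⁻¹` is contained in the trace dual of `O`).
Therefore `d = |q|`.
-/

open Quaternion

/-- An order of a quaternion algebra `B` over `ℚ`: a unital subring of `B` that is finitely
generated as a `ℤ`-module and contains a basis of `B` over `ℚ` (equivalently, spans `B`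
over `ℚ`). -/
def IsOrder {B : Type*} [Ring B] [Algebra ℚ B] (O : Subring B) : Prop :=
  (AddSubgroup.toIntSubmodule O.toAddSubgroup).FG ∧
    Submodule.span ℚ (O : Set B) = ⊤

/-- The reduced trace on `ℍ[ℚ, a, b]`: `trd(α) = α + ᾱ = 2·re(α)`. -/
def trd {a b : ℚ} (α : ℍ[ℚ, a, b]) : ℚ := 2 * α.re

/-! ### The span of the ordered monomials is a ring -/

/-- Relations of Poincaré–Birkhoff–Witt type: every product of `v1, v2, v3` can be reordered and
shortened with integer coefficients, so the span of the eight ordered monomials is closed under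
multiplication. -/
theorem mem_span_mul {A : Type*} [Ring A] {v1 v2 v3 : A} {p1 p2 c1 c2 c3 t : ℤ}
    (h11 : v1 * v1 = p1 • v1 + c1 • (1 : A)) (h22 : v2 * v2 = p2 • v2 + c2 • (1 : A))
    (h33 : v3 * v3 = c3 • (1 : A))
    (h21 : v2 * v1 = p2 • v1 + p1 • v2 + t • (1 : A) - v1 * v2)
    (h31 : v3 * v1 = p1 • v3 - v1 * v3) (h32 : v3 * v2 = p2 • v3 - v2 * v3)
    {y z : A}
    (hy : y ∈ Submodule.span ℤ
      ({1, v1, v2, v3, v1 * v2, v1 * v3, v2 * v3, v1 * v2 * v3} : Set A))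
    (hz : z ∈ Submodule.span ℤ
      ({1, v1, v2, v3, v1 * v2, v1 * v3, v2 * v3, v1 * v2 * v3} : Set A)) :
    y * z ∈ Submodule.span ℤ
      ({1, v1, v2, v3, v1 * v2, v1 * v3, v2 * v3, v1 * v2 * v3} : Set A) := by
  set S := Submodule.span ℤ
      ({1, v1, v2, v3, v1 * v2, v1 * v3, v2 * v3, v1 * v2 * v3} : Set A) with hS
  have g0 : (1 : A) ∈ S := Submodule.subset_span (by simp)
  have g1 : v1 ∈ S := Submodule.subset_span (by simp)
  have g2 : v2 ∈ S := Submodule.subset_span (by simp)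
  have g3 : v3 ∈ S := Submodule.subset_span (by simp)
  have g12 : v1 * v2 ∈ S := Submodule.subset_span (by simp)
  have g13 : v1 * v3 ∈ S := Submodule.subset_span (by simp)
  have g23 : v2 * v3 ∈ S := Submodule.subset_span (by simp)
  have g123 : v1 * (v2 * v3) ∈ S := Submodule.subset_span (by simp [mul_assoc])
  -- Stability of `S` under left multiplication by `u` only needs checking on the monomials.
  have lift : ∀ u : A, u ∈ S → u * v1 ∈ S → u * v2 ∈ S → u * v3 ∈ S → u * (v1 * v2) ∈ S →
      u * (v1 * v3) ∈ S → u * (v2 * v3) ∈ S → u * (v1 * (v2 * v3)) ∈ S →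
      ∀ s ∈ S, u * s ∈ S := by
    intro u k0 k1 k2 k3 k12 k13 k23 k123 s hs
    induction hs using Submodule.span_induction with
    | mem s hs =>
      simp only [Set.mem_insert_iff, Set.mem_singleton_iff] at hs
      rcases hs with rfl | rfl | rfl | rfl | rfl | rfl | rfl | rfl <;>
        simpa [mul_assoc] using by assumption
    | zero => simp
    | add a b _ _ ha hb => rw [mul_add]; exact S.add_mem ha hb
    | smul n a _ ha => rw [mul_smul_comm]; exact S.smul_mem n ha
  have h11' : ∀ m, v1 * (v1 * m) = p1 • (v1 * m) + c1 • m := fun m => by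
    rw [← mul_assoc, h11, add_mul, smul_mul_assoc, smul_mul_assoc, one_mul]
  have h22' : ∀ m, v2 * (v2 * m) = p2 • (v2 * m) + c2 • m := fun m => by
    rw [← mul_assoc, h22, add_mul, smul_mul_assoc, smul_mul_assoc, one_mul]
  have h21' : ∀ m, v2 * (v1 * m) = p2 • (v1 * m) + p1 • (v2 * m) + t • m - v1 * (v2 * m) :=
    fun m => by
      rw [← mul_assoc, h21, sub_mul, add_mul, add_mul, smul_mul_assoc, smul_mul_assoc,
        smul_mul_assoc, one_mul, mul_assoc]
  have h31' : ∀ m, v3 * (v1 * m) = p1 • (v3 * m) - v1 * (v3 * m) := fun m => by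
    rw [← mul_assoc, h31, sub_mul, smul_mul_assoc, mul_assoc]
  have h32' : ∀ m, v3 * (v2 * m) = p2 • (v3 * m) - v2 * (v3 * m) := fun m => by
    rw [← mul_assoc, h32, sub_mul, smul_mul_assoc, mul_assoc]
  have L1 : ∀ s ∈ S, v1 * s ∈ S := by
    apply lift <;> try simp only [h11, h11']
    all_goals
      repeat' first
        | assumption | apply S.add_mem | apply S.sub_mem | apply S.smul_mem
  have L2 : ∀ s ∈ S, v2 * s ∈ S := by
    apply lift <;> try simp only [h21, h21', h22, h22']
    all_goals
      repeat' first
        | assumption | apply S.add_mem | apply S.sub_mem | apply S.smul_mem | apply L1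
  have L3 : ∀ s ∈ S, v3 * s ∈ S := by
    apply lift <;> try simp only [h31, h31', h32, h32', h33]
    all_goals
      repeat' first
        | assumption | apply S.add_mem | apply S.sub_mem | apply S.smul_mem | apply L1
        | apply L2
  induction hy using Submodule.span_induction with
  | mem s hs =>
    simp only [Set.mem_insert_iff, Set.mem_singleton_iff] at hs
    rcases hs with rfl | rfl | rfl | rfl | rfl | rfl | rfl | rfl <;>
      (try simp only [one_mul, mul_assoc]) <;>
      repeat' first | assumption | apply L1 | apply L2 | apply L3
  | zero => simp
  | add a b _ _ ha hb => rw [add_mul]; exact S.add_mem ha hb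
  | smul n a _ ha => rw [smul_mul_assoc]; exact S.smul_mem n ha

/-! ### The frame attached to a pair of square roots -/

section Abstract

variable {A : Type*} [Ring A] [Algebra ℚ A]

/-- The multiplication table of `w1`, `w2` and `w3 = (w1 * w2 - x) / l` in an algebra where
`w1 ^ 2 = D1`, `w2 ^ 2 = D2`, `w1 * w2 + w2 * w1 = 2 * x`, with `D3 = (x ^ 2 - D1 * D2) / l ^ 2`.
The products are recorded as combinations of `1, w1, w2, w3`. -/
structure Frame (w1 w2 w3 : A) (D1 D2 D3 x l : ℚ) : Prop where
  l_ne : l ≠ 0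
  norm_eq : l ^ 2 * D3 = x ^ 2 - D1 * D2
  m11 : w1 * w1 = D1 • (1 : A)
  m12 : w1 * w2 = x • (1 : A) + l • w3
  m13 : w1 * w3 = (D1 / l) • w2 - (x / l) • w1
  m21 : w2 * w1 = x • (1 : A) - l • w3
  m22 : w2 * w2 = D2 • (1 : A)
  m23 : w2 * w3 = (x / l) • w2 - (D2 / l) • w1
  m31 : w3 * w1 = (x / l) • w1 - (D1 / l) • w2
  m32 : w3 * w2 = (D2 / l) • w1 - (x / l) • w2
  m33 : w3 * w3 = D3 • (1 : A)

theorem Frame.of_link {w1 w2 w3 : A} {D1 D2 D3 x l : ℚ} (hl : l ≠ 0)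
    (hD3 : l ^ 2 * D3 = x ^ 2 - D1 * D2)
    (h1 : w1 * w1 = D1 • (1 : A)) (h2 : w2 * w2 = D2 • (1 : A))
    (h12 : w1 * w2 + w2 * w1 = (2 * x) • (1 : A))
    (h3 : w3 = l⁻¹ • (w1 * w2 - x • (1 : A))) : Frame w1 w2 w3 D1 D2 D3 x l := by
  have h21 : w2 * w1 = (2 * x) • (1 : A) - w1 * w2 := eq_sub_of_add_eq' h12
  have a1 : w1 * (w1 * w2) = D1 • w2 := by rw [← mul_assoc, h1, smul_one_mul]
  have a2 : w2 * (w1 * w2) = (2 * x) • w2 - D2 • w1 := by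
    rw [← mul_assoc, h21, sub_mul, smul_one_mul, mul_assoc, h2, mul_smul_one]
  have a3 : w1 * w2 * w1 = (2 * x) • w1 - D1 • w2 := by
    rw [mul_assoc, h21, mul_sub, a1, mul_smul_one]
  have a4 : w1 * w2 * w2 = D2 • w1 := by rw [mul_assoc, h2, mul_smul_one]
  have a5 : w1 * w2 * (w1 * w2) = (2 * x) • (w1 * w2) - (D1 * D2) • (1 : A) := by
    rw [mul_assoc, a2, mul_sub, mul_smul_comm, mul_smul_comm, h1, smul_smul, mul_comm D2]
  have hD : D3 = (x ^ 2 - D1 * D2) / l ^ 2 := by rw [← hD3]; field_simp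
  subst h3 hD
  refine ⟨hl, hD3, h1, ?_, ?_, ?_, h2, ?_, ?_, ?_, ?_⟩
  all_goals
    simp only [mul_sub, sub_mul, mul_smul_comm, smul_mul_assoc, mul_one, one_mul, smul_sub,
      smul_smul, a1, a2, a3, a4, a5, h21]
    match_scalars <;> field_simp <;> ring

/-- The Gram matrix of a quadruple `y` for the bilinear form `(u, v) ↦ f (u * v)`. -/
def gram (f : A →ₗ[ℚ] ℚ) (y : Fin 4 → A) : Matrix (Fin 4) (Fin 4) ℚ :=
  Matrix.of fun i j => f (y i * y j)

theorem gram_eq_mul (f : A →ₗ[ℚ] ℚ) (y e : Fin 4 → A) (C : Matrix (Fin 4) (Fin 4) ℚ)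
    (h : ∀ i, y i = ∑ k, C i k • e k) : gram f y = C * gram f e * C.transpose := by
  ext i j
  have key : f (y i * y j) = ∑ k, ∑ m, C i k * C j m * f (e k * e m) := by
    rw [h i, h j, Finset.sum_mul_sum]
    simp only [map_sum, smul_mul_smul_comm, map_smul, smul_eq_mul]
  simp only [gram, Matrix.of_apply, Matrix.mul_apply, Matrix.transpose_apply, key,
    Finset.sum_mul]
  rw [Finset.sum_comm]
  exact Finset.sum_congr rfl fun _ _ => Finset.sum_congr rfl fun _ _ => by ring

theorem det_gram (f : A →ₗ[ℚ] ℚ) (y e : Fin 4 → A) (C : Matrix (Fin 4) (Fin 4) ℚ)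
    (h : ∀ i, y i = ∑ k, C i k • e k) :
    (gram f y).det = C.det ^ 2 * (gram f e).det := by
  rw [gram_eq_mul f y e C h, Matrix.det_mul, Matrix.det_mul, Matrix.det_transpose]; ring

variable {w1 w2 w3 : A} {D1 D2 D3 x l : ℚ}

theorem Frame.det_gram_frame (F : Frame w1 w2 w3 D1 D2 D3 x l) {τ : A →ₗ[ℚ] ℚ}
    (t0 : τ 1 = 2) (t1 : τ w1 = 0) (t2 : τ w2 = 0) (t3 : τ w3 = 0) :
    (gram τ ![1, w1, w2, w3]).det = -(4 * l * D3) ^ 2 := by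
  have : gram τ ![1, w1, w2, w3] =
      !![2, 0, 0, 0; 0, 2 * D1, 2 * x, 0; 0, 2 * x, 2 * D2, 0; 0, 0, 0, 2 * D3] := by
    ext i j
    fin_cases i <;> fin_cases j <;>
      simp [gram, F.m11, F.m12, F.m13, F.m21, F.m22, F.m23, F.m31, F.m32, F.m33,
        t0, t1, t2, t3, mul_comm]
  rw [this]
  simp [Matrix.det_succ_row_zero, Fin.sum_univ_succ, Fin.succAbove]
  linear_combination (16 * D3) * F.norm_eq

/-- The Gram determinant of the frame for the form `(u, v) ↦ τ (u * v * (w3 / 2))`. -/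
theorem Frame.det_gram_twist (F : Frame w1 w2 w3 D1 D2 D3 x l) {τ : A →ₗ[ℚ] ℚ}
    (t0 : τ 1 = 2) (t1 : τ w1 = 0) (t2 : τ w2 = 0) (t3 : τ w3 = 0) :
    (gram (τ ∘ₗ LinearMap.mulRight ℚ ((2 : ℚ)⁻¹ • w3)) ![1, w1, w2, w3]).det
      = -(l * D3 ^ 2) ^ 2 := by
  have hl := F.l_ne
  have : gram (τ ∘ₗ LinearMap.mulRight ℚ ((2 : ℚ)⁻¹ • w3)) ![1, w1, w2, w3] =
      !![0, 0, 0, D3; 0, 0, l * D3, 0; 0, -(l * D3), 0, 0; D3, 0, 0, 0] := by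
    ext i j
    fin_cases i <;> fin_cases j <;>
      simp [gram, F.m11, F.m12, F.m13, F.m21, F.m22, F.m23, F.m31, F.m32, F.m33,
        t0, t1, t2, t3, add_mul, sub_mul] <;> ring
  rw [this]
  simp [Matrix.det_succ_row_zero, Fin.sum_univ_succ, Fin.succAbove]
  ring

/-- The frame is linearly independent since its Gram matrix for the trace is nonsingular. -/
theorem Frame.linearIndependent (F : Frame w1 w2 w3 D1 D2 D3 x l) {τ : A →ₗ[ℚ] ℚ}
    (t0 : τ 1 = 2) (t1 : τ w1 = 0) (t2 : τ w2 = 0) (t3 : τ w3 = 0) (hD3 : D3 ≠ 0) :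
    LinearIndependent ℚ ![1, w1, w2, w3] := by
  rw [Fintype.linearIndependent_iff]
  intro g hg
  have hdet : (gram τ ![1, w1, w2, w3]).det ≠ 0 := by
    rw [F.det_gram_frame t0 t1 t2 t3]
    have := F.l_ne
    exact neg_ne_zero.mpr (by positivity)
  refine fun i => congrFun (Matrix.eq_zero_of_vecMul_eq_zero hdet (v := g) ?_) i
  ext j
  have := congrArg (fun z => τ (z * ![1, w1, w2, w3] j)) hg
  simpa [Matrix.vecMul, dotProduct, gram, Finset.sum_mul] using this

/-! ### The half-integral elements and the reduced discriminant -/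

/-- A frame with integer parameters and `D3 = 4 * q`, together with the elements
`vᵢ = (pᵢ + wᵢ) / 2`, where `p3 = 0`. The integers `c1, c2, t` are the constant terms in the
relations between the `vᵢ`. -/
structure HalfFrame (w1 w2 w3 v1 v2 v3 : A) (D1 D2 x l p1 p2 c1 c2 t q : ℤ) : Prop
    extends Frame w1 w2 w3 (D1 : ℚ) D2 (4 * q) x l where
  D1_eq : D1 = p1 ^ 2 + 4 * c1
  D2_eq : D2 = p2 ^ 2 + 4 * c2
  x_eq : x = p1 * p2 + 2 * t
  v1_eq : v1 = (2 : ℚ)⁻¹ • ((p1 : ℚ) • (1 : A) + w1)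
  v2_eq : v2 = (2 : ℚ)⁻¹ • ((p2 : ℚ) • (1 : A) + w2)
  v3_eq : v3 = (2 : ℚ)⁻¹ • w3

namespace HalfFrame

variable {v1 v2 v3 : A} {D1 D2 x l p1 p2 c1 c2 t q : ℤ}

theorem v1_sq (H : HalfFrame w1 w2 w3 v1 v2 v3 D1 D2 x l p1 p2 c1 c2 t q) :
    v1 * v1 = p1 • v1 + c1 • (1 : A) := by
  have h : (D1 : ℚ) = p1 ^ 2 + 4 * c1 := by exact_mod_cast H.D1_eq
  rw [H.v1_eq]
  simp only [mul_add, add_mul, mul_smul_comm, smul_mul_assoc, mul_one, one_mul, H.m11, h]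
  module

theorem v2_sq (H : HalfFrame w1 w2 w3 v1 v2 v3 D1 D2 x l p1 p2 c1 c2 t q) :
    v2 * v2 = p2 • v2 + c2 • (1 : A) := by
  have h : (D2 : ℚ) = p2 ^ 2 + 4 * c2 := by exact_mod_cast H.D2_eq
  rw [H.v2_eq]
  simp only [mul_add, add_mul, mul_smul_comm, smul_mul_assoc, mul_one, one_mul, H.m22, h]
  module

theorem v3_sq (H : HalfFrame w1 w2 w3 v1 v2 v3 D1 D2 x l p1 p2 c1 c2 t q) :
    v3 * v3 = q • (1 : A) := by
  rw [H.v3_eq]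
  simp only [mul_smul_comm, smul_mul_assoc, H.m33]
  module

theorem v2_mul_v1 (H : HalfFrame w1 w2 w3 v1 v2 v3 D1 D2 x l p1 p2 c1 c2 t q) :
    v2 * v1 = p2 • v1 + p1 • v2 + t • (1 : A) - v1 * v2 := by
  have h : (x : ℚ) = p1 * p2 + 2 * t := by exact_mod_cast H.x_eq
  rw [H.v1_eq, H.v2_eq]
  simp only [mul_add, add_mul, mul_smul_comm, smul_mul_assoc, mul_one, one_mul, H.m12, H.m21, h]
  module

theorem v3_mul_v1 (H : HalfFrame w1 w2 w3 v1 v2 v3 D1 D2 x l p1 p2 c1 c2 t q) :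
    v3 * v1 = p1 • v3 - v1 * v3 := by
  rw [H.v1_eq, H.v3_eq]
  simp only [mul_add, add_mul, mul_smul_comm, smul_mul_assoc, mul_one, one_mul, H.m13, H.m31]
  module

theorem v3_mul_v2 (H : HalfFrame w1 w2 w3 v1 v2 v3 D1 D2 x l p1 p2 c1 c2 t q) :
    v3 * v2 = p2 • v3 - v2 * v3 := by
  rw [H.v2_eq, H.v3_eq]
  simp only [mul_add, add_mul, mul_smul_comm, smul_mul_assoc, mul_one, one_mul, H.m23, H.m32]
  module

theorem v1_mul_v2 (H : HalfFrame w1 w2 w3 v1 v2 v3 D1 D2 x l p1 p2 c1 c2 t q) :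
    v1 * v2 = ((p1 * p2 + x : ℚ) / 4) • (1 : A) + (p2 / 4 : ℚ) • w1 + (p1 / 4 : ℚ) • w2
      + (l / 4 : ℚ) • w3 := by
  rw [H.v1_eq, H.v2_eq]
  simp only [mul_add, add_mul, mul_smul_comm, smul_mul_assoc, mul_one, one_mul, H.m12]
  module

theorem v1_mul_v3 (H : HalfFrame w1 w2 w3 v1 v2 v3 D1 D2 x l p1 p2 c1 c2 t q) :
    v1 * v3 = (-(x / l) / 4 : ℚ) • w1 + ((D1 / l) / 4 : ℚ) • w2 + (p1 / 4 : ℚ) • w3 := by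
  rw [H.v1_eq, H.v3_eq]
  simp only [add_mul, mul_smul_comm, smul_mul_assoc, one_mul, H.m13]
  module

theorem v2_mul_v3 (H : HalfFrame w1 w2 w3 v1 v2 v3 D1 D2 x l p1 p2 c1 c2 t q) :
    v2 * v3 = (-(D2 / l) / 4 : ℚ) • w1 + ((x / l) / 4 : ℚ) • w2 + (p2 / 4 : ℚ) • w3 := by
  rw [H.v2_eq, H.v3_eq]
  simp only [add_mul, mul_smul_comm, smul_mul_assoc, one_mul, H.m23]
  module

/-- The span of the ordered monomials times `v3` has traces in `q ℤ`. -/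
theorem trace_mul_v3 (H : HalfFrame w1 w2 w3 v1 v2 v3 D1 D2 x l p1 p2 c1 c2 t q)
    {τ : A →ₗ[ℚ] ℚ} (t0 : τ 1 = 2) (t1 : τ w1 = 0) (t2 : τ w2 = 0) (t3 : τ w3 = 0) {y : A}
    (hy : y ∈ Submodule.span ℤ
      ({1, v1, v2, v3, v1 * v2, v1 * v3, v2 * v3, v1 * v2 * v3} : Set A)) :
    ∃ n : ℤ, τ (y * v3) = q * n := by
  have hx : (x : ℚ) = p1 * p2 + 2 * t := by exact_mod_cast H.x_eq
  have e1 : τ v1 = p1 := by simp [H.v1_eq, t0, t1]; ring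
  have e2 : τ v2 = p2 := by simp [H.v2_eq, t0, t2]; ring
  have e3 : τ v3 = 0 := by simp [H.v3_eq, t3]
  have e12 : τ (v1 * v2) = p1 * p2 + t := by
    rw [H.v1_mul_v2]; simp [t0, t1, t2, t3, hx]; ring
  have e13 : τ (v1 * v3) = 0 := by rw [H.v1_mul_v3]; simp [t1, t2, t3]
  have e23 : τ (v2 * v3) = 0 := by rw [H.v2_mul_v3]; simp [t1, t2, t3]
  have e123 : τ (v1 * v2 * v3) = l * q := by
    rw [H.v1_mul_v2, H.v3_eq]
    simp [add_mul, H.m13, H.m23, H.m33, t0, t1, t2, t3]; ring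
  have h33 : v3 * v3 = (q : ℚ) • (1 : A) := by rw [H.v3_sq, Int.cast_smul_eq_zsmul]
  induction hy using Submodule.span_induction with
  | mem s hs =>
    simp only [Set.mem_insert_iff, Set.mem_singleton_iff] at hs
    rcases hs with rfl | rfl | rfl | rfl | rfl | rfl | rfl | rfl
    · exact ⟨0, by simp [e3]⟩
    · exact ⟨0, by simp [e13]⟩
    · exact ⟨0, by simp [e23]⟩
    · exact ⟨2, by simp [h33, t0]⟩
    · exact ⟨l, by rw [e123]; ring⟩
    · exact ⟨p1, by simp [mul_assoc, h33, e1]⟩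
    · exact ⟨p2, by simp [mul_assoc, h33, e2]⟩
    · exact ⟨p1 * p2 + t, by rw [mul_assoc, h33]; simp [e12]⟩
  | zero => exact ⟨0, by simp⟩
  | add a b _ _ ha hb =>
    obtain ⟨m, hm⟩ := ha
    obtain ⟨n, hn⟩ := hb
    exact ⟨m + n, by rw [add_mul, map_add, hm, hn]; push_cast; ring⟩
  | smul k a _ ha =>
    obtain ⟨m, hm⟩ := ha
    exact ⟨k * m, by rw [smul_mul_assoc, map_zsmul, hm]; simp; ring⟩

/-- If `y` is a quadruple in the `ℤ`-span of `β` with coordinate matrix `C` in the frame, then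
the discriminant `16 l q det C` of `y` is a multiple of the discriminant `d` of `β`: the Gram
determinants differ by the square of the (integral) determinant of the change of coordinates. -/
theorem dvd_of_coords (H : HalfFrame w1 w2 w3 v1 v2 v3 D1 D2 x l p1 p2 c1 c2 t q)
    {τ : A →ₗ[ℚ] ℚ} (t0 : τ 1 = 2) (t1 : τ w1 = 0) (t2 : τ w2 = 0) (t3 : τ w3 = 0)
    {β y : Fin 4 → A} (hy : ∀ i, y i ∈ Submodule.span ℤ (Set.range β))
    {d : ℤ} (hd : (d : ℚ) ^ 2 = -(gram τ β).det) (C : Matrix (Fin 4) (Fin 4) ℚ)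
    (hC : ∀ i, y i = ∑ k, C i k • ![1, w1, w2, w3] k) {n : ℤ}
    (hn : 16 * l * q * C.det = n) : d ∣ n := by
  choose U hU using fun i => (Submodule.mem_span_range_iff_exists_fun ℤ).1 (hy i)
  have h1 := det_gram τ y β ((Matrix.of U).map (Int.cast : ℤ → ℚ)) (fun i => by
    rw [← hU i]
    exact Finset.sum_congr rfl fun k _ => (Int.cast_smul_eq_zsmul ℚ (U i k) (β k)).symm)
  have h2 := det_gram τ y _ C hC
  rw [H.det_gram_frame t0 t1 t2 t3] at h2
  have h3 : ((Matrix.of U).map (Int.cast : ℤ → ℚ)).det = ((Matrix.of U).det : ℤ) :=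
    ((Int.castRingHom ℚ).map_det (Matrix.of U)).symm
  rw [h3] at h1
  rw [← Int.pow_dvd_pow_iff two_ne_zero]
  refine ⟨(Matrix.of U).det ^ 2, ?_⟩
  have : (n : ℚ) ^ 2 = d ^ 2 * ((Matrix.of U).det : ℤ) ^ 2 := by
    rw [← hn, hd]; linear_combination h2 - h1
  exact_mod_cast this

/-- Any reduced discriminant `d` of the span of the ordered monomials equals `|q|`, provided
`D1`, `D2` and `l ^ 2` are jointly coprime. -/
theorem discrd_eq (H : HalfFrame w1 w2 w3 v1 v2 v3 D1 D2 x l p1 p2 c1 c2 t q)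
    (hq : q ≠ 0) (hcop : ∃ r s u : ℤ, D1 * r + D2 * s + l ^ 2 * u = 1)
    {τ : A →ₗ[ℚ] ℚ} (t0 : τ 1 = 2) (t1 : τ w1 = 0) (t2 : τ w2 = 0) (t3 : τ w3 = 0)
    (hspan : Submodule.span ℚ (Set.range ![1, w1, w2, w3]) = ⊤)
    {β : Fin 4 → A}
    (hβ : ∀ i, β i ∈ Submodule.span ℤ
      ({1, v1, v2, v3, v1 * v2, v1 * v3, v2 * v3, v1 * v2 * v3} : Set A))
    (hgen : Submodule.span ℤ
      ({1, v1, v2, v3, v1 * v2, v1 * v3, v2 * v3, v1 * v2 * v3} : Set A)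
        ≤ Submodule.span ℤ (Set.range β))
    {d : ℤ} (hd0 : 0 < d) (hd : (d : ℚ) ^ 2 = -(gram τ β).det) : d = |q| := by
  have hl := H.l_ne
  have gen : ∀ y ∈ ({1, v1, v2, v3, v1 * v2, v1 * v3, v2 * v3, v1 * v2 * v3} : Set A),
      y ∈ Submodule.span ℤ (Set.range β) := fun y hy => hgen (Submodule.subset_span hy)
  have n12 : d ∣ q * l ^ 2 := by
    refine H.dvd_of_coords t0 t1 t2 t3 (y := ![1, v1, v2, v1 * v2]) ?_ hd
      !![1, 0, 0, 0; p1 / 2, 1 / 2, 0, 0; p2 / 2, 0, 1 / 2, 0;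
        (p1 * p2 + x) / 4, p2 / 4, p1 / 4, l / 4] ?_ ?_
    · intro i; fin_cases i <;> exact gen _ (by simp)
    · intro i
      fin_cases i <;> simp [Fin.sum_univ_succ, H.v1_mul_v2]
      · rw [H.v1_eq]; module
      · rw [H.v2_eq]; module
      · module
    · simp [Matrix.det_succ_row_zero, Fin.sum_univ_succ, Fin.succAbove]; ring
  have n13 : d ∣ -(q * D1) := by
    refine H.dvd_of_coords t0 t1 t2 t3 (y := ![1, v1, v3, v1 * v3]) ?_ hd
      !![1, 0, 0, 0; p1 / 2, 1 / 2, 0, 0; 0, 0, 0, 1 / 2;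
        0, -(x / l) / 4, (D1 / l) / 4, p1 / 4] ?_ ?_
    · intro i; fin_cases i <;> exact gen _ (by simp)
    · intro i
      fin_cases i <;> simp [Fin.sum_univ_succ, H.v1_mul_v3]
      · rw [H.v1_eq]; module
      · rw [H.v3_eq]
      · module
    · simp [Matrix.det_succ_row_zero, Fin.sum_univ_succ, Fin.succAbove]; field_simp; ring
  have n23 : d ∣ -(q * D2) := by
    refine H.dvd_of_coords t0 t1 t2 t3 (y := ![1, v2, v3, v2 * v3]) ?_ hd
      !![1, 0, 0, 0; p2 / 2, 0, 1 / 2, 0; 0, 0, 0, 1 / 2;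
        0, -(D2 / l) / 4, (x / l) / 4, p2 / 4] ?_ ?_
    · intro i; fin_cases i <;> exact gen _ (by simp)
    · intro i
      fin_cases i <;> simp [Fin.sum_univ_succ, H.v2_mul_v3]
      · rw [H.v2_eq]; module
      · rw [H.v3_eq]
      · module
    · simp [Matrix.det_succ_row_zero, Fin.sum_univ_succ, Fin.succAbove]; field_simp; ring
  have hdq : d ∣ q := by
    obtain ⟨r, s, u, h⟩ := hcop
    have := ((n13.mul_right (-r)).add (n23.mul_right (-s))).add (n12.mul_right u)
    rwa [show -(q * D1) * -r + -(q * D2) * -s + q * l ^ 2 * u = q by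
      linear_combination q * h] at this
  have hqd : q ∣ d := by
    choose N hN using fun i j => H.trace_mul_v3 t0 t1 t2 t3
      (mem_span_mul H.v1_sq H.v2_sq H.v3_sq H.v2_mul_v1 H.v3_mul_v1 H.v3_mul_v2 (hβ i) (hβ j))
    choose C hC using fun i => (Submodule.mem_span_range_iff_exists_fun ℚ).1
      (hspan ▸ Submodule.mem_top : β i ∈ Submodule.span ℚ (Set.range ![1, w1, w2, w3]))
    have hC' : ∀ i, β i = ∑ k, Matrix.of C i k • ![1, w1, w2, w3] k := fun i => (hC i).symm
    have h1 := det_gram τ β _ _ hC'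
    have h2 := det_gram (τ ∘ₗ LinearMap.mulRight ℚ ((2 : ℚ)⁻¹ • w3)) β _ _ hC'
    rw [H.det_gram_frame t0 t1 t2 t3] at h1
    rw [H.det_gram_twist t0 t1 t2 t3] at h2
    have h3 : gram (τ ∘ₗ LinearMap.mulRight ℚ ((2 : ℚ)⁻¹ • w3)) β
        = (q : ℚ) • (Matrix.of N).map (Int.cast : ℤ → ℚ) := by
      ext i j
      simp [gram, ← hN, H.v3_eq]
    have h4 : ((Matrix.of N).map (Int.cast : ℤ → ℚ)).det = ((Matrix.of N).det : ℤ) :=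
      ((Int.castRingHom ℚ).map_det (Matrix.of N)).symm
    rw [h3, Matrix.det_smul, h4, Fintype.card_fin] at h2
    have hq' : (q : ℚ) ≠ 0 := by exact_mod_cast hq
    rw [← Int.pow_dvd_pow_iff two_ne_zero]
    refine ⟨-(Matrix.of N).det, ?_⟩
    have : (d : ℚ) ^ 2 = q ^ 2 * -((Matrix.of N).det : ℤ) := by
      refine mul_left_cancel₀ (pow_ne_zero 2 hq') ?_
      rw [hd]
      linear_combination (-(q : ℚ) ^ 2) * h1 + h2
    exact_mod_cast this
  exact Int.dvd_antisymm hd0.le (abs_nonneg q) ((dvd_abs d q).2 hdq) ((abs_dvd q d).2 hqd)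

end HalfFrame

end Abstract

/-! ### Integrality in orders, and the reduced trace of a quaternion algebra -/

/-- An order consists of integral elements, so it does not contain `1 / 2`. -/
theorem half_notMem_of_isOrder {B : Type*} [Ring B] [Algebra ℚ B] [Nontrivial B]
    {O : Subring B} (hO : IsOrder O) : algebraMap ℚ B 2⁻¹ ∉ O := by
  intro h
  have hint : IsIntegral ℤ (algebraMap ℚ B 2⁻¹) :=
    IsIntegral.of_mem_of_fg (subalgebraOfSubring O) hO.1 _ h
  rw [isIntegral_algebraMap_iff (algebraMap ℚ B).injective,
    IsIntegrallyClosed.isIntegral_iff] at hint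
  obtain ⟨n, hn⟩ := hint
  have h2 : ((2 * n : ℤ) : ℚ) = 1 := by
    push_cast
    rw [show (n : ℚ) = 2⁻¹ from hn]
    norm_num
  have : 2 * n = 1 := by exact_mod_cast h2
  omega

/-- An order cannot contain `(1 + u) / 2` and `(1 + w) / 2` with `u`, `w` anticommuting: their
product plus its conjugate would be `1 / 2`. -/
theorem odd_contra {B : Type*} [Ring B] [Algebra ℚ B] [Nontrivial B]
    {O : Subring B} (hO : IsOrder O) {u w : B} (hu : (2 : ℚ)⁻¹ • (1 + u) ∈ O)
    (hw : (2 : ℚ)⁻¹ • (1 + w) ∈ O) (h : w * u = -(u * w)) : False := by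
  refine half_notMem_of_isOrder hO ?_
  -- The two factors of the last product are the conjugates of `(1 + w) / 2` and `(1 + u) / 2`.
  have key : algebraMap ℚ B 2⁻¹ =
      (2 : ℚ)⁻¹ • (1 + u) * (2 : ℚ)⁻¹ • (1 + w)
        + (1 - (2 : ℚ)⁻¹ • (1 + w)) * (1 - (2 : ℚ)⁻¹ • (1 + u)) := by
    rw [Algebra.algebraMap_eq_smul_one]
    simp only [mul_add, add_mul, mul_sub, sub_mul, smul_mul_assoc, mul_smul_comm, one_mul,
      mul_one, h, smul_add]
    module
  rw [key]
  exact O.add_mem (O.mul_mem hu hw)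
    (O.mul_mem (O.sub_mem O.one_mem hw) (O.sub_mem O.one_mem hu))

/-- A nonscalar quaternion whose square is a scalar has real part zero, since its imaginary
components are killed by `2 * w.re`. -/
theorem re_eq_zero_of_sq {a b D : ℚ} {w : ℍ[ℚ, a, b]}
    (hns : w ∉ Set.range (algebraMap ℚ ℍ[ℚ, a, b]))
    (hsq : w ^ 2 = algebraMap ℚ ℍ[ℚ, a, b] D) : w.re = 0 := by
  by_contra hre
  refine hns ⟨w.re, ?_⟩
  rw [pow_two] at hsq
  have hi := congrArg QuaternionAlgebra.imI hsq
  have hj := congrArg QuaternionAlgebra.imJ hsq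
  have hk := congrArg QuaternionAlgebra.imK hsq
  simp at hi hj hk
  have hi' : w.re * w.imI = 0 := by linarith
  have hj' : w.re * w.imJ = 0 := by linarith
  have hk' : w.re * w.imK = 0 := by linarith
  ext
  · simp
  · simpa using ((mul_eq_zero.1 hi').resolve_left hre).symm
  · simpa using ((mul_eq_zero.1 hj').resolve_left hre).symm
  · simpa using ((mul_eq_zero.1 hk').resolve_left hre).symm

theorem re_mul_swap {a b : ℚ} (y z : ℍ[ℚ, a, b]) : (y * z).re = (z * y).re := by
  simp; ring

/-- The reduced trace as a `ℚ`-linear map. -/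
def trdLin (a b : ℚ) : ℍ[ℚ, a, b] →ₗ[ℚ] ℚ where
  toFun := trd
  map_add' y z := by simp [trd]; ring
  map_smul' r y := by simp [trd]; ring

/-- A discriminant is congruent to the square of its parity modulo `4`. -/
theorem disc_eq {D : ℤ} (h : D % 4 = 0 ∨ D % 4 = 1) : D = (D % 2) ^ 2 + 4 * (D / 4) := by
  rcases Int.emod_two_eq_zero_or_one D with e | e <;> rw [e] <;> omega

/-- Let `B = ℍ[ℚ, a, b]` be a quaternion algebra over `ℚ`, let `(D1, D2, x)` be a nice
admissible triple, and let `w1, w2 ∈ B` with `wᵢ ∉ ℚ·1`, `wᵢ² = Dᵢ·1` and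
`½·trd(w1·w2) = x` (i.e. `w1·w2 + w2·w1 = 2x·1`). Let `ℓ` be a positive integer such that
`D3 := (x² − D1·D2)/ℓ²` is an integer `≡ 0` or `1 (mod 4)`. Set `vᵢ = (p_{Dᵢ}·1 + wᵢ)/2` for
`i = 1, 2`, `w3 := (w1·w2 − x·1)/ℓ`, and `v3 := (p_{D3}·1 + w3)/2`. Then there exists an
order of `B` containing `v1, v2` and `v3` if and only if `ℓ²` divides `(D1·D2 − x²)/4`; and
in that case the `ℤ`-submodule of `B` spanned by
`{1, v1, v2, v3, v1·v2, v1·v3, v2·v3, v1·v2·v3}` is the smallest such order and its reduced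
discriminant equals `|D1·D2 − x²|/(4ℓ²)`. -/
theorem stmt16 (a b : ℚ) (ha : a ≠ 0) (hb : b ≠ 0)
    (D1 D2 x : ℤ)
    (hadm : 0 < D1 ∧ 0 < D2 ∧ (D1 % 4 = 0 ∨ D1 % 4 = 1) ∧ (D2 % 4 = 0 ∨ D2 % 4 = 1) ∧
      x % 2 = (D1 * D2) % 2 ∧ x ^ 2 ≠ D1 * D2)
    (hnice : Int.gcd D1 (Int.gcd D2 (D1 * D2 - x ^ 2)) = 1)
    (w1 w2 : ℍ[ℚ, a, b])
    (hw1ns : w1 ∉ Set.range (algebraMap ℚ ℍ[ℚ, a, b]))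
    (hw2ns : w2 ∉ Set.range (algebraMap ℚ ℍ[ℚ, a, b]))
    (hw1sq : w1 ^ 2 = algebraMap ℚ ℍ[ℚ, a, b] ((D1 : ℤ) : ℚ))
    (hw2sq : w2 ^ 2 = algebraMap ℚ ℍ[ℚ, a, b] ((D2 : ℤ) : ℚ))
    (hlink : w1 * w2 + w2 * w1 = algebraMap ℚ ℍ[ℚ, a, b] ((2 * x : ℤ) : ℚ))
    (ℓ : ℕ) (hℓ : 0 < ℓ)
    (D3 : ℤ) (hD3div : (ℓ : ℤ) ^ 2 ∣ x ^ 2 - D1 * D2)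
    (hD3 : D3 = (x ^ 2 - D1 * D2) / (ℓ : ℤ) ^ 2)
    (hD3disc : D3 % 4 = 0 ∨ D3 % 4 = 1)
    (v1 v2 v3 w3 : ℍ[ℚ, a, b])
    (hv1 : v1 = (2 : ℚ)⁻¹ • (algebraMap ℚ ℍ[ℚ, a, b] ((D1 % 2 : ℤ) : ℚ) + w1))
    (hv2 : v2 = (2 : ℚ)⁻¹ • (algebraMap ℚ ℍ[ℚ, a, b] ((D2 % 2 : ℤ) : ℚ) + w2))
    (hw3 : w3 = ((ℓ : ℚ))⁻¹ • (w1 * w2 - algebraMap ℚ ℍ[ℚ, a, b] ((x : ℤ) : ℚ)))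
    (hv3 : v3 = (2 : ℚ)⁻¹ • (algebraMap ℚ ℍ[ℚ, a, b] ((D3 % 2 : ℤ) : ℚ) + w3)) :
    ((∃ O : Subring ℍ[ℚ, a, b], IsOrder O ∧ v1 ∈ O ∧ v2 ∈ O ∧ v3 ∈ O) ↔
      (ℓ : ℤ) ^ 2 ∣ (D1 * D2 - x ^ 2) / 4) ∧
    ((ℓ : ℤ) ^ 2 ∣ (D1 * D2 - x ^ 2) / 4 →
      ∃ O : Subring ℍ[ℚ, a, b],
        (O : Set ℍ[ℚ, a, b]) =
          (Submodule.span ℤ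
            ({1, v1, v2, v3, v1 * v2, v1 * v3, v2 * v3, v1 * v2 * v3} :
              Set ℍ[ℚ, a, b]) : Set ℍ[ℚ, a, b]) ∧
        IsOrder O ∧ v1 ∈ O ∧ v2 ∈ O ∧ v3 ∈ O ∧
        (∀ O' : Subring ℍ[ℚ, a, b],
          IsOrder O' → v1 ∈ O' → v2 ∈ O' → v3 ∈ O' → O ≤ O') ∧
        (∀ β : Fin 4 → ℍ[ℚ, a, b],
          (∀ i, β i ∈ O) →
          (∀ z ∈ O, z ∈ Submodule.span ℤ (Set.range β)) →
          LinearIndependent ℤ β →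
          ∀ d : ℤ, 0 < d →
            ((d : ℚ)) ^ 2 =
              - Matrix.det (Matrix.of fun i j : Fin 4 => trd (β i * β j)) →
            d = |D1 * D2 - x ^ 2| / (4 * (ℓ : ℤ) ^ 2))) := by
  obtain ⟨-, -, hD1, hD2, hx, hne⟩ := hadm
  have hl : (ℓ : ℚ) ≠ 0 := by exact_mod_cast hℓ.ne'
  have hlz : (ℓ : ℤ) ^ 2 ≠ 0 := by positivity
  have hD3eq : (ℓ : ℤ) ^ 2 * D3 = x ^ 2 - D1 * D2 := by
    rw [hD3]; exact Int.mul_ediv_cancel' hD3div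
  have hD3q : (ℓ : ℚ) ^ 2 * D3 = (x : ℚ) ^ 2 - D1 * D2 := by exact_mod_cast hD3eq
  have F : Frame w1 w2 w3 (D1 : ℚ) D2 D3 x ℓ := by
    refine Frame.of_link hl hD3q ?_ ?_ ?_ ?_
    · rw [← pow_two, hw1sq, Algebra.algebraMap_eq_smul_one]
    · rw [← pow_two, hw2sq, Algebra.algebraMap_eq_smul_one]
    · rw [hlink, Algebra.algebraMap_eq_smul_one]; push_cast; rfl
    · rw [hw3, Algebra.algebraMap_eq_smul_one]
  have t0 : trdLin a b 1 = 2 := by simp [trdLin, trd]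
  have t1 : trdLin a b w1 = 0 := by
    simp [trdLin, trd, re_eq_zero_of_sq hw1ns hw1sq]
  have t2 : trdLin a b w2 = 0 := by
    simp [trdLin, trd, re_eq_zero_of_sq hw2ns hw2sq]
  have t3 : trdLin a b w3 = 0 := by
    have h := congrArg QuaternionAlgebra.re hlink
    rw [QuaternionAlgebra.re_add, re_mul_swap w2 w1] at h
    have h' : (w1 * w2).re = x := by
      rw [QuaternionAlgebra.coe_algebraMap, QuaternionAlgebra.re_coe] at h
      push_cast at h
      linarith
    have : w3.re = 0 := by
      rw [hw3, QuaternionAlgebra.re_smul, QuaternionAlgebra.re_sub, h',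
        QuaternionAlgebra.coe_algebraMap, QuaternionAlgebra.re_coe, sub_self, smul_zero]
    simp [trdLin, trd, this]
  -- `D1 * D2` is `0` or `1` modulo `4`, and `x` has the same parity.
  have h4 : (4 : ℤ) ∣ D1 * D2 - x ^ 2 := by
    obtain ⟨t, ht⟩ : ∃ t, x = (D1 % 2) * (D2 % 2) + 2 * t := by
      have : x % 2 = ((D1 % 2) * (D2 % 2)) % 2 := by rw [hx, Int.mul_emod]
      exact ⟨(x - (D1 % 2) * (D2 % 2)) / 2, by omega⟩
    obtain ⟨c1, hc1⟩ : ∃ c, D1 = D1 % 2 + 4 * c := ⟨D1 / 4, by omega⟩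
    obtain ⟨c2, hc2⟩ : ∃ c, D2 = D2 % 2 + 4 * c := ⟨D2 / 4, by omega⟩
    rcases Int.emod_two_eq_zero_or_one D1 with e1 | e1 <;>
      rcases Int.emod_two_eq_zero_or_one D2 with e2 | e2 <;>
      rw [e1] at hc1 ht <;> rw [e2] at hc2 ht <;> rw [ht, hc1, hc2]
    · exact ⟨4 * c1 * c2 - t ^ 2, by ring⟩
    · exact ⟨c1 + 4 * c1 * c2 - t ^ 2, by ring⟩
    · exact ⟨c2 + 4 * c1 * c2 - t ^ 2, by ring⟩
    · exact ⟨c1 + c2 + 4 * c1 * c2 - t - t ^ 2, by ring⟩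
  have hdvd : (ℓ : ℤ) ^ 2 ∣ (D1 * D2 - x ^ 2) / 4 → ∃ q, D3 = 4 * q := by
    rintro ⟨k, hk⟩
    refine ⟨-k, mul_left_cancel₀ hlz ?_⟩
    have := Int.mul_ediv_cancel' h4
    rw [hk] at this
    linear_combination hD3eq + this
  have main : (ℓ : ℤ) ^ 2 ∣ (D1 * D2 - x ^ 2) / 4 →
      ∃ O : Subring ℍ[ℚ, a, b],
        (O : Set ℍ[ℚ, a, b]) =
          (Submodule.span ℤ
            ({1, v1, v2, v3, v1 * v2, v1 * v3, v2 * v3, v1 * v2 * v3} :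
              Set ℍ[ℚ, a, b]) : Set ℍ[ℚ, a, b]) ∧
        IsOrder O ∧ v1 ∈ O ∧ v2 ∈ O ∧ v3 ∈ O ∧
        (∀ O' : Subring ℍ[ℚ, a, b],
          IsOrder O' → v1 ∈ O' → v2 ∈ O' → v3 ∈ O' → O ≤ O') ∧
        (∀ β : Fin 4 → ℍ[ℚ, a, b],
          (∀ i, β i ∈ O) →
          (∀ z ∈ O, z ∈ Submodule.span ℤ (Set.range β)) →
          LinearIndependent ℤ β →
          ∀ d : ℤ, 0 < d →
            ((d : ℚ)) ^ 2 =
              - Matrix.det (Matrix.of fun i j : Fin 4 => trd (β i * β j)) →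
            d = |D1 * D2 - x ^ 2| / (4 * (ℓ : ℤ) ^ 2)) := by
    intro hdiv
    obtain ⟨q, rfl⟩ := hdvd hdiv
    have hq : q ≠ 0 := by
      rintro rfl
      exact hne (by linear_combination -hD3eq)
    have H : HalfFrame w1 w2 w3 v1 v2 v3 D1 D2 x ℓ (D1 % 2) (D2 % 2)
        (D1 / 4) (D2 / 4) ((x - (D1 % 2) * (D2 % 2)) / 2) q := by
      refine ⟨by exact_mod_cast F, ?_, ?_, ?_, ?_, ?_, ?_⟩
      · exact disc_eq hD1
      · exact disc_eq hD2
      · have : x % 2 = ((D1 % 2) * (D2 % 2)) % 2 := by rw [hx, Int.mul_emod]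
        omega
      · rw [hv1, Algebra.algebraMap_eq_smul_one]
      · rw [hv2, Algebra.algebraMap_eq_smul_one]
      · rw [hv3, show (4 * q) % 2 = 0 by omega]; simp
    have hli := F.linearIndependent t0 t1 t2 t3 (by exact_mod_cast mul_ne_zero four_ne_zero hq)
    have hspan := hli.span_eq_top_of_card_eq_finrank
      (by rw [Fintype.card_fin, QuaternionAlgebra.finrank_eq_four])
    let S := Submodule.span ℤ
      ({1, v1, v2, v3, v1 * v2, v1 * v3, v2 * v3, v1 * v2 * v3} : Set ℍ[ℚ, a, b])
    let O : Subring ℍ[ℚ, a, b] :=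
      { S.toAddSubgroup with
        mul_mem' := fun hy hz => mem_span_mul H.v1_sq H.v2_sq H.v3_sq H.v2_mul_v1
          H.v3_mul_v1 H.v3_mul_v2 hy hz
        one_mem' := Submodule.subset_span (by simp) }
    have m0 : (1 : ℍ[ℚ, a, b]) ∈ O := O.one_mem
    have m1 : v1 ∈ O := Submodule.subset_span (by simp)
    have m2 : v2 ∈ O := Submodule.subset_span (by simp)
    have m3 : v3 ∈ O := Submodule.subset_span (by simp)
    refine ⟨O, rfl, ⟨?_, ?_⟩, m1, m2, m3, ?_, ?_⟩
    · exact Submodule.fg_span (Set.toFinite _)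
    · rw [eq_top_iff, ← hspan, Submodule.span_le]
      rintro _ ⟨i, rfl⟩
      set T := Submodule.span ℚ (O : Set ℍ[ℚ, a, b])
      have k0 : (1 : ℍ[ℚ, a, b]) ∈ T := Submodule.subset_span m0
      have k1 : v1 ∈ T := Submodule.subset_span m1
      have k2 : v2 ∈ T := Submodule.subset_span m2
      have k3 : v3 ∈ T := Submodule.subset_span m3
      fin_cases i
      · exact k0
      · have : w1 = (2 : ℚ) • v1 - ((D1 % 2 : ℤ) : ℚ) • 1 := by rw [H.v1_eq]; module
        exact this ▸ T.sub_mem (T.smul_mem _ k1) (T.smul_mem _ k0)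
      · have : w2 = (2 : ℚ) • v2 - ((D2 % 2 : ℤ) : ℚ) • 1 := by rw [H.v2_eq]; module
        exact this ▸ T.sub_mem (T.smul_mem _ k2) (T.smul_mem _ k0)
      · have : w3 = (2 : ℚ) • v3 := by rw [H.v3_eq]; module
        exact this ▸ T.smul_mem _ k3
    · intro O' _ n1 n2 n3
      have : S ≤ AddSubgroup.toIntSubmodule O'.toAddSubgroup := by
        refine Submodule.span_le.2 fun y hy => ?_
        change y ∈ O'
        simp only [Set.mem_insert_iff, Set.mem_singleton_iff] at hy
        rcases hy with rfl | rfl | rfl | rfl | rfl | rfl | rfl | rfl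
        exacts [O'.one_mem, n1, n2, n3, O'.mul_mem n1 n2, O'.mul_mem n1 n3, O'.mul_mem n2 n3,
          O'.mul_mem (O'.mul_mem n1 n2) n3]
      exact this
    · intro β hβ hgen _ d hd0 hd
      have hcop : ∃ r s u : ℤ, D1 * r + D2 * s + (ℓ : ℤ) ^ 2 * u = 1 := by
        have e1 := Int.gcd_eq_gcd_ab D1 (Int.gcd D2 (D1 * D2 - x ^ 2))
        have e2 := Int.gcd_eq_gcd_ab D2 (D1 * D2 - x ^ 2)
        rw [hnice] at e1
        rw [e2] at e1
        generalize Int.gcdA D1 _ = r at e1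
        generalize Int.gcdB D1 _ = s at e1
        generalize Int.gcdA D2 _ = r' at e1
        generalize Int.gcdB D2 _ = s' at e1
        -- `D1 * D2 - x ^ 2 = -(4 * q) * ℓ ^ 2` turns niceness into a relation with `ℓ ^ 2`.
        refine ⟨r, r' * s, -(4 * q) * s' * s, ?_⟩
        push_cast at e1
        linear_combination -e1 - s' * s * hD3eq
      rw [H.discrd_eq hq hcop t0 t1 t2 t3 hspan hβ hgen hd0 hd,
        show D1 * D2 - x ^ 2 = -(4 * (ℓ : ℤ) ^ 2 * q) by linear_combination hD3eq,
        abs_neg, abs_mul, abs_of_pos (by positivity : 0 < 4 * (ℓ : ℤ) ^ 2),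
        Int.mul_ediv_cancel_left _ (by positivity)]
  refine ⟨⟨?_, fun h => ?_⟩, main⟩
  · rintro ⟨O, hO, m1, m2, m3⟩
    rcases hD3disc with h0 | h1
    · obtain ⟨q, hq⟩ := Int.dvd_of_emod_eq_zero h0
      refine ⟨-q, Int.ediv_eq_of_eq_mul_right four_ne_zero ?_⟩
      rw [hq] at hD3eq
      linear_combination hD3eq
    · exfalso
      have e3 : D3 % 2 = 1 := by omega
      rw [hv3, e3, Int.cast_one, map_one] at m3
      rcases Int.emod_two_eq_zero_or_one D1 with e1 | e1
      · rcases Int.emod_two_eq_zero_or_one D2 with e2 | e2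
        · -- If `D1`, `D2` are both even, then `2` divides the gcd in the niceness condition.
          have : (2 : ℤ) ∣ Int.gcd D1 (Int.gcd D2 (D1 * D2 - x ^ 2)) :=
            Int.dvd_coe_gcd (Int.dvd_of_emod_eq_zero e1)
              (Int.dvd_coe_gcd (Int.dvd_of_emod_eq_zero e2) (dvd_trans (by norm_num) h4))
          rw [hnice] at this
          norm_num at this
        · rw [hv2, e2, Int.cast_one, map_one] at m2
          exact odd_contra hO m2 m3 (by rw [F.m32, F.m23]; module)
      · rw [hv1, e1, Int.cast_one, map_one] at m1
        exact odd_contra hO m1 m3 (by rw [F.m31, F.m13]; module)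
  · obtain ⟨O, -, hO, m1, m2, m3, -⟩ := main h
    exact ⟨O, hO, m1, m2, m3⟩
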